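/- Assume neither p nor q is a root of unity, and let A_S be the localization of A = A_p(1, 1, K_q[s,t]) at the Ore set S = {z^i s^j t^k : i, j, k ∈ Z_{≥0}}. Then every unital K-algebra endomorphism φ of A_S satisfies either φ(x) = g·x, φ(y) = h·y and φ(z) = α·z, or φ(x) = g·y, φ(y) = h·x and φ(z) = α·z⁻¹, for some g, h in the subalgebra of A_S generated by z^{±1}, s^{±1}, t^{±1}; moreover φ(s) = β·z^m s^c t^d and φ(t) = γ·z^n s^e t^f for some α, β, γ ∈ K^× and integers m, n, c, d, e, f with cf − de = 1. -/

import Mathlib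

/-!
The localization `B = A_S` is graded by `ℤ`. Let `R` be the subalgebra generated by
`z^{±1}, s^{±1}, t^{±1}`, put `w_n = x^n` for `n ≥ 0` and `w_n = y^{-n}` for `n < 0`. Since
`yx = (z - 1)/(p - 1)` and `xy = (pz - 1)/(p - 1)`, the sum of the `R w_n` is a left ideal
containing `1`, hence all of `B` (`LocModel.iSup_W`). Conjugation by `z` acts on `R w_n` by `p^n`,
and these eigenvalues are distinct because `p` is not a root of unity; so an element that commutes
with a power `z^i` up to a power of `p` is homogeneous, with known degree (`LocModel.homog`).

Inverting `x` as well gives a homomorphism `ρ` to the quantum torus on `z, s, t, x`, realized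
as operators on `K[ℤ^4]`. The group `ℤ^4` has the two-unique-sums property, so the quantum torus
is a domain and every factor of a monomial is a monomial (`twMul_eq_zero`, `twMul_eq_monomial`).
It follows that `ρ` is injective (`LocModel.ρ_injective`) and that units of `B` map to monomials.
As `y` maps to a binomial, no unit has negative degree; applied to a unit and its inverse this shows
that units have degree `0`, and that they are exactly the `c z^i s^j t^k` (`LocModel.unit_form`).

Therefore an endomorphism `φ` sends `z, s, t` to such monomials. The relation `st = q ts` forces the
determinant of the `s, t`-exponents of `φ(s), φ(t)` to be `1`, and as `φ(z)` commutes with both, it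
is `α z^i`. Finally `φ(x) z^i = p z^i φ(x)` puts `φ(x)` in a degree `n` with `n i = 1`, so
`i = n = ± 1`, and likewise `φ(y)` has degree `-n` (`LocModel.endo_form`).
-/

noncomputable section

open FreeAlgebra

/-- Relations of the algebra `A_p(lam, mu, K_q[s,t])`; for `lam = mu = 1` this is
`A_p(1, 1, K_q[s,t])`: `xy - p·yx = 1`, `st = q·ts`, `s,t` commute with `x,y`. -/
inductive ExtWeylRel (K : Type*) [Field K] (p q lam mu : K) :
    FreeAlgebra K (Fin 4) → FreeAlgebra K (Fin 4) → Prop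
  | weyl : ExtWeylRel K p q lam mu (ι K (0 : Fin 4) * ι K 1 - p • (ι K 1 * ι K 0)) 1
  | st : ExtWeylRel K p q lam mu (ι K (2 : Fin 4) * ι K 3) (q • (ι K 3 * ι K 2))
  | sx : ExtWeylRel K p q lam mu (ι K (2 : Fin 4) * ι K 0) (lam • (ι K 0 * ι K 2))
  | sy : ExtWeylRel K p q lam mu (ι K (2 : Fin 4) * ι K 1) (lam⁻¹ • (ι K 1 * ι K 2))
  | tx : ExtWeylRel K p q lam mu (ι K (3 : Fin 4) * ι K 0) (mu • (ι K 0 * ι K 3))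
  | ty : ExtWeylRel K p q lam mu (ι K (3 : Fin 4) * ι K 1) (mu⁻¹ • (ι K 1 * ι K 3))

/-- The algebra `A_p(lam, mu, K_q[s,t])`. -/
abbrev ExtWeyl (K : Type*) [Field K] (p q lam mu : K) : Type _ :=
  RingQuot (ExtWeylRel K p q lam mu)

variable (K : Type*) [Field K] (p q : K)

/-- The generator `x` of `A = A_p(1, 1, K_q[s,t])`. -/
def wx : ExtWeyl K p q 1 1 := RingQuot.mkAlgHom K _ (ι K 0)
/-- The generator `y`. -/
def wy : ExtWeyl K p q 1 1 := RingQuot.mkAlgHom K _ (ι K 1)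
/-- The generator `s`. -/
def ws : ExtWeyl K p q 1 1 := RingQuot.mkAlgHom K _ (ι K 2)
/-- The generator `t`. -/
def wt : ExtWeyl K p q 1 1 := RingQuot.mkAlgHom K _ (ι K 3)
/-- The element `z = xy - yx`. -/
def wz : ExtWeyl K p q 1 1 := wx K p q * wy K p q - wy K p q * wx K p q

/-- The multiplicative (Ore) set `S` generated by `z, s, t`. -/
def locS : Submonoid (ExtWeyl K p q 1 1) :=
  Submonoid.closure {wz K p q, ws K p q, wt K p q}

variable [OreLocalization.OreSet (locS K p q)]

/-- The localization `A_S` of `A` at the Ore set `S`. -/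
abbrev ALoc := OreLocalization (locS K p q) (ExtWeyl K p q 1 1)

/-- The image of `x` in `A_S`. -/
def lx : ALoc K p q := OreLocalization.numeratorRingHom (wx K p q)
/-- The image of `y` in `A_S`. -/
def ly : ALoc K p q := OreLocalization.numeratorRingHom (wy K p q)
/-- The image of `s` in `A_S`. -/
def ls : ALoc K p q := OreLocalization.numeratorRingHom (ws K p q)
/-- The image of `t` in `A_S`. -/
def lt : ALoc K p q := OreLocalization.numeratorRingHom (wt K p q)
/-- The image of `z` in `A_S`. -/
def lz : ALoc K p q := OreLocalization.numeratorRingHom (wz K p q)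

/-- `z` as a unit of `A_S`. -/
def uz : (ALoc K p q)ˣ :=
  OreLocalization.numeratorUnit ⟨wz K p q, Submonoid.subset_closure (by simp)⟩
/-- `s` as a unit of `A_S`. -/
def us : (ALoc K p q)ˣ :=
  OreLocalization.numeratorUnit ⟨ws K p q, Submonoid.subset_closure (by simp)⟩
/-- `t` as a unit of `A_S`. -/
def ut : (ALoc K p q)ˣ :=
  OreLocalization.numeratorUnit ⟨wt K p q, Submonoid.subset_closure (by simp)⟩

/-- The subalgebra `K[z^{±1}]_q[s^{±1}, t^{±1}]` of `A_S` generated by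
`z^{±1}, s^{±1}, t^{±1}`. -/
def laurentSub : Subalgebra K (ALoc K p q) :=
  Algebra.adjoin K
    ({(uz K p q : ALoc K p q), (((uz K p q)⁻¹ : (ALoc K p q)ˣ) : ALoc K p q),
      (us K p q : ALoc K p q), (((us K p q)⁻¹ : (ALoc K p q)ˣ) : ALoc K p q),
      (ut K p q : ALoc K p q), (((ut K p q)⁻¹ : (ALoc K p q)ˣ) : ALoc K p q)} : Set (ALoc K p q))

/-! ### Twisted group algebras -/

section Twisted

open Finsupp

variable {F : Type*} [Field F] {G : Type*} [AddCommGroup G] (θ : G → G → F)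

/-- The operator `e_w ↦ θ(v, w) e_{v + w}` on the vector space with basis `G`: left multiplication
by the basis element `v` in the group algebra of `G` twisted by `θ`. -/
def twOp (v : G) : Module.End F (G →₀ F) :=
  linearCombination F (fun w => single (v + w) (θ v w))

/-- Left multiplication by an arbitrary element `f` of the twisted group algebra, as an operator
on the underlying space of finitely supported functions. -/
def twMul : (G →₀ F) →ₗ[F] Module.End F (G →₀ F) :=
  linearCombination F (twOp θ)

lemma twOp_single (v w : G) (c : F) :
    twOp θ v (single w c) = single (v + w) (c * θ v w) := by
  simp [twOp, linearCombination_single]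

lemma twMul_single (v : G) (c : F) : twMul θ (single v c) = c • twOp θ v := by
  simp [twMul, linearCombination_single]

lemma twMul_apply (f g : G →₀ F) :
    twMul θ f g = ∑ v ∈ f.support, ∑ w ∈ g.support, single (v + w) (f v * g w * θ v w) := by
  have h1 : twMul θ f = ∑ v ∈ f.support, f v • twOp θ v := by
    simp [twMul, linearCombination_apply, Finsupp.sum]
  rw [h1, LinearMap.sum_apply]
  refine Finset.sum_congr rfl fun v _ => ?_
  simp [-single_mul, twOp, linearCombination_apply, Finsupp.sum, Finset.smul_sum, smul_single,
    mul_assoc]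

/-- When `a + b` is attained only once on the product of the supports, no cancellation happens
in the coefficient of the product at `a + b`. -/
lemma twMul_apply_unique (f g : G →₀ F) (a b : G) (ha : a ∈ f.support) (hb : b ∈ g.support)
    (h : UniqueAdd f.support g.support a b) :
    twMul θ f g (a + b) = f a * g b * θ a b := by
  classical
  rw [twMul_apply, finsetSum_apply, Finset.sum_eq_single_of_mem a ha, finsetSum_apply,
    Finset.sum_eq_single_of_mem b hb]
  · simp
  · intro w hw hne
    rw [single_apply, if_neg]
    intro he
    exact hne (h ha hw he).2
  · intro v hv hne
    rw [finsetSum_apply]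
    refine Finset.sum_eq_zero fun w hw => ?_
    rw [single_apply, if_neg]
    intro he
    exact hne (h hv hw he).1

variable {θ}

lemma twMul_eval (h0 : ∀ v, θ v 0 = 1) (f : G →₀ F) : twMul θ f (single 0 1) = f := by
  induction f using Finsupp.induction_linear with
  | zero => simp
  | add f g hf hg => simp [hf, hg]
  | single v c => simp [twMul_single, twOp_single, h0]

lemma twMul_injective (h0 : ∀ v, θ v 0 = 1) : Function.Injective (twMul θ) := by
  intro f g h
  rw [← twMul_eval h0 f, h, twMul_eval h0]

lemma twOp_mul (hl : ∀ u v w, θ (u + v) w = θ u w * θ v w)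
    (hr : ∀ u v w, θ u (v + w) = θ u v * θ u w) (v w : G) :
    twOp θ v * twOp θ w = θ v w • twOp θ (v + w) := by
  ext u : 2
  simp only [LinearMap.coe_comp, Function.comp_apply, lsingle_apply, Module.End.mul_apply,
    LinearMap.smul_apply, twOp_single, smul_single, hl, hr, add_assoc]
  congr 1
  simp only [smul_eq_mul]
  ring

lemma twOp_zero (h0 : ∀ w, θ 0 w = 1) : twOp θ 0 = 1 := by
  ext u : 2
  simp [twOp_single, h0]

lemma twMul_mul (hl : ∀ u v w, θ (u + v) w = θ u w * θ v w)
    (hr : ∀ u v w, θ u (v + w) = θ u v * θ u w) (f g : G →₀ F) :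
    twMul θ f * twMul θ g = twMul θ (twMul θ f g) := by
  induction f using Finsupp.induction_linear with
  | zero => simp
  | add f f' hf hf' => simp [hf, hf', add_mul]
  | single v c =>
    induction g using Finsupp.induction_linear with
    | zero => simp
    | add g g' hg hg' => simp [hg, hg', mul_add]
    | single w d =>
      simp only [twMul_single, LinearMap.smul_apply, twOp_single, smul_single, smul_mul_smul_comm,
        twOp_mul hl hr, smul_smul, smul_eq_mul]
      congr 1
      ring

/-- A twisted group algebra over a group with the two-unique-sums property has only trivial
factorizations of monomials: two unique sums would give two distinct terms of the product. -/
lemma twMul_eq_monomial [TwoUniqueSums G] (hne : ∀ v w, θ v w ≠ 0) (f g : G →₀ F) (v : G) (c : F)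
    (hc : c ≠ 0) (h : twMul θ f g = single v c) :
    (∃ a d, d ≠ 0 ∧ f = single a d) ∧ (∃ a d, d ≠ 0 ∧ g = single a d) := by
  have hf : f.support.card ≠ 0 := by
    intro h'
    obtain rfl : f = 0 := by simpa using h'
    simp at h
    exact hc (by simpa using h.symm)
  have hg : g.support.card ≠ 0 := by
    intro h'
    obtain rfl : g = 0 := by simpa using h'
    simp at h
    exact hc (by simpa using h.symm)
  have key : ∀ a b, a ∈ f.support → b ∈ g.support → UniqueAdd f.support g.support a b →
      a + b = v := by
    intro a b ha hb hu
    have h1 := twMul_apply_unique θ f g a b ha hb hu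
    rw [h] at h1
    by_contra hab
    rw [single_eq_of_ne hab] at h1
    exact mul_ne_zero (mul_ne_zero (mem_support_iff.1 ha) (mem_support_iff.1 hb)) (hne a b) h1.symm
  have hle : ¬ 1 < f.support.card * g.support.card := by
    intro hlt
    obtain ⟨p1, h1, p2, h2, hp, hu1, hu2⟩ := TwoUniqueSums.uniqueAdd_of_one_lt_card hlt
    rw [Finset.mem_product] at h1 h2
    have e1 := key _ _ h1.1 h1.2 hu1
    have e2 := key _ _ h2.1 h2.2 hu2
    obtain ⟨e, e'⟩ := hu1 h2.1 h2.2 (e2.trans e1.symm)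
    exact hp (Prod.ext e.symm e'.symm)
  have hprod : f.support.card * g.support.card = 1 := by
    have := Nat.mul_ne_zero hf hg
    omega
  obtain ⟨h1, h2⟩ := mul_eq_one.1 hprod
  obtain ⟨a, ha, ha'⟩ := card_support_eq_one.1 h1
  obtain ⟨b, hb, hb'⟩ := card_support_eq_one.1 h2
  exact ⟨⟨a, _, ha, ha'⟩, ⟨b, _, hb, hb'⟩⟩

lemma twMul_eq_zero [TwoUniqueSums G] (hne : ∀ v w, θ v w ≠ 0) (f g : G →₀ F)
    (h : twMul θ f g = 0) : f = 0 ∨ g = 0 := by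
  by_contra! hfg
  obtain ⟨a, ha, b, hb, hu⟩ := UniqueSums.uniqueAdd_of_nonempty
    (support_nonempty_iff.2 hfg.1) (support_nonempty_iff.2 hfg.2)
  have h1 := twMul_apply_unique θ f g a b ha hb hu
  rw [h] at h1
  exact mul_ne_zero (mul_ne_zero (mem_support_iff.1 ha) (mem_support_iff.1 hb)) (hne a b) h1.symm

end Twisted

/-! ### Skew commutation and eigenvectors of conjugation -/

section Skew

variable {F : Type*} [Field F] {B : Type*} [Ring B] [Algebra F B]

lemma skew_zpow {a : B} {z : Bˣ} {c : F} (hc : c ≠ 0) (h : a * z = c • ((z : B) * a)) (i : ℤ) :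
    a * (z ^ i : Bˣ) = c ^ i • (((z ^ i : Bˣ) : B) * a) := by
  have hinv : a * ((z⁻¹ : Bˣ) : B) = c⁻¹ • (((z⁻¹ : Bˣ) : B) * a) := by
    rw [Units.mul_inv_eq_iff_eq_mul, smul_mul_assoc, mul_assoc, h, mul_smul_comm, smul_smul,
      inv_mul_cancel₀ hc, one_smul, Units.inv_mul_cancel_left]
  induction i using Int.induction_on with
  | zero => simp
  | succ n ih =>
    rw [zpow_add_one, Units.val_mul, ← mul_assoc, ih, smul_mul_assoc, mul_assoc, h, mul_smul_comm,
      smul_smul, zpow_add_one₀ hc, mul_assoc]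
  | pred n ih =>
    rw [zpow_sub_one, Units.val_mul, ← mul_assoc, ih, smul_mul_assoc, mul_assoc, hinv,
      mul_smul_comm, smul_smul, zpow_sub_one₀ hc, mul_assoc]

lemma skew_flip {a b : B} {c : F} (hc : c ≠ 0) (h : a * b = c • (b * a)) :
    b * a = c⁻¹ • (a * b) := by
  rw [h, smul_smul, inv_mul_cancel₀ hc, one_smul]

lemma skew_zpow_zpow {u v : Bˣ} {c : F} (hc : c ≠ 0) (h : (u : B) * v = c • ((v : B) * u))
    (i j : ℤ) : ((u ^ i : Bˣ) : B) * (v ^ j : Bˣ) =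
      c ^ (i * j) • (((v ^ j : Bˣ) : B) * (u ^ i : Bˣ)) := by
  have h1 := skew_flip (zpow_ne_zero j hc) (skew_zpow hc h j)
  have h2 := skew_flip (zpow_ne_zero i (inv_ne_zero (zpow_ne_zero j hc)))
    (skew_zpow (inv_ne_zero (zpow_ne_zero j hc)) h1 i)
  rw [h2, inv_zpow, inv_inv, ← zpow_mul, mul_comm j i]

lemma zpow_inj_of_not_root {P : F} (hP : P ≠ 0) (hr : ∀ n : ℕ, 0 < n → P ^ n ≠ 1) :
    Function.Injective (fun n : ℤ => P ^ n) := by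
  have key : ∀ n : ℤ, P ^ n = 1 → n = 0 := by
    intro n hn
    by_contra h0
    apply hr n.natAbs (Int.natAbs_pos.2 h0)
    rcases Int.natAbs_eq n with h | h
    · rw [h, zpow_natCast] at hn
      exact hn
    · rw [h, zpow_neg, zpow_natCast, inv_eq_one] at hn
      exact hn
  intro a b hab
  have : P ^ (a - b) = 1 := by
    have hab' : P ^ a = P ^ b := hab
    rw [zpow_sub₀ hP, hab', div_self (zpow_ne_zero b hP)]
  have := key _ this
  omega

/-- Elements on which conjugation by the unit `z` acts with the pairwise distinct eigenvalues
`P ^ n` are linearly independent. -/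
lemma skew_indep {P : F} (hP : P ≠ 0) (hr : ∀ n : ℕ, 0 < n → P ^ n ≠ 1) (z : Bˣ)
    (S : Finset ℤ) (v : ℤ → B) (hv : ∀ n ∈ S, v n * z = P ^ n • ((z : B) * v n))
    (h : ∑ n ∈ S, v n = 0) : ∀ n ∈ S, v n = 0 := by
  let C : Module.End F B := LinearMap.mulLeft F ((z⁻¹ : Bˣ) : B) ∘ₗ LinearMap.mulRight F (z : B)
  have hi := (Module.End.eigenspaces_iSupIndep C).comp (zpow_inj_of_not_root hP hr)
  refine (iSupIndep_iff_finsetSum_eq_zero_imp_eq_zero _).1 hi S v (fun n hn => ?_) h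
  simp only [Function.comp_apply, Module.End.mem_eigenspace_iff]
  simp [C, hv n hn]

end Skew

/-! ### The abstract situation -/

section Model

open Finsupp

/-- The cocycle of the quantum torus with generators `z, s, t, x`, the basis element
`(i, j, k, n)` standing for the ordered monomial `z^i s^j t^k x^n`. -/
def torusCocycle {F : Type*} [Field F] (P Q : F) (v w : ℤ × ℤ × ℤ × ℤ) : F :=
  P ^ (v.2.2.2 * w.1) * Q ^ (-(v.2.2.1 * w.2.1))

/-- An algebra `B` generated by `x, y` and the units `z, s, t` with the relations of the localized
algebra, together with a homomorphism `ρ` to the quantum torus (acting on itself by left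
multiplication) in which `x` becomes invertible and `y = (P - 1)⁻¹ (z - 1) x⁻¹`. -/
structure LocModel (F : Type*) [Field F] (P Q : F) (B : Type*) [Ring B] [Algebra F B] where
  hP : P ≠ 0
  hQ : Q ≠ 0
  hPr : ∀ n : ℕ, 0 < n → P ^ n ≠ 1
  hQr : ∀ n : ℕ, 0 < n → Q ^ n ≠ 1
  x : B
  y : B
  z : Bˣ
  s : Bˣ
  t : Bˣ
  weyl : x * y - P • (y * x) = 1
  xz : x * z = P • ((z : B) * x)
  zy : z * y = P • (y * (z : B))
  yx : y * x = (P - 1)⁻¹ • ((z : B) - 1)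
  xy : x * y = (P - 1)⁻¹ • (P • (z : B) - 1)
  sx : Commute (s : B) x
  sy : Commute (s : B) y
  tx : Commute (t : B) x
  ty : Commute (t : B) y
  zs : Commute (z : B) s
  zt : Commute (z : B) t
  st : (s : B) * t = Q • ((t : B) * s)
  gen : Algebra.adjoin F ({x, y, (z : B), ((z⁻¹ : Bˣ) : B), (s : B), ((s⁻¹ : Bˣ) : B), (t : B),
    ((t⁻¹ : Bˣ) : B)} : Set B) = ⊤
  ρ : B →ₐ[F] Module.End F ((ℤ × ℤ × ℤ × ℤ) →₀ F)
  ρx : ρ x = twOp (torusCocycle P Q) (0, 0, 0, 1)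
  ρy : ρ y = twMul (torusCocycle P Q)
    (single (1, 0, 0, -1) (P - 1)⁻¹ - single (0, 0, 0, -1) (P - 1)⁻¹)
  ρz : ρ z = twOp (torusCocycle P Q) (1, 0, 0, 0)
  ρs : ρ s = twOp (torusCocycle P Q) (0, 1, 0, 0)
  ρt : ρ t = twOp (torusCocycle P Q) (0, 0, 1, 0)

namespace LocModel

variable {F : Type*} [Field F] {P Q : F} {B : Type*} [Ring B] [Algebra F B]

lemma cocycle_ne (hP : P ≠ 0) (hQ : Q ≠ 0) (v w) : torusCocycle P Q v w ≠ 0 :=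
  mul_ne_zero (zpow_ne_zero _ hP) (zpow_ne_zero _ hQ)

lemma cocycle_left (hP : P ≠ 0) (hQ : Q ≠ 0) (u v w) :
    torusCocycle P Q (u + v) w = torusCocycle P Q u w * torusCocycle P Q v w := by
  simp only [torusCocycle, Prod.fst_add, Prod.snd_add, add_mul, neg_add, zpow_add₀ hP,
    zpow_add₀ hQ]
  ring

lemma cocycle_right (hP : P ≠ 0) (hQ : Q ≠ 0) (u v w) :
    torusCocycle P Q u (v + w) = torusCocycle P Q u v * torusCocycle P Q u w := by
  simp only [torusCocycle, Prod.fst_add, Prod.snd_add, mul_add, neg_add, zpow_add₀ hP,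
    zpow_add₀ hQ]
  ring

lemma cocycle_zero_right (v) : torusCocycle P Q v 0 = 1 := by simp [torusCocycle]

lemma cocycle_zero_left (v) : torusCocycle P Q 0 v = 1 := by simp [torusCocycle]

variable (D : LocModel F P Q B)

lemma P_sub_one_ne (D : LocModel F P Q B) : P - 1 ≠ 0 := by
  have := D.hPr 1 one_pos
  rw [pow_one] at this
  exact sub_ne_zero.2 this

/-- The subalgebra generated by `z, s, t` and their inverses. -/
def R : Subalgebra F B :=
  Algebra.adjoin F ({(D.z : B), ((D.z⁻¹ : Bˣ) : B), (D.s : B), ((D.s⁻¹ : Bˣ) : B), (D.t : B),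
    ((D.t⁻¹ : Bˣ) : B)} : Set B)

/-- The ordered monomial `z^i s^j t^k`. -/
def mono (v : ℤ × ℤ × ℤ) : Bˣ := D.z ^ v.1 * D.s ^ v.2.1 * D.t ^ v.2.2

/-- The homogeneous element of degree `n`: `x^n` if `n ≥ 0`, and `y^(-n)` otherwise. -/
def w (n : ℤ) : B := if 0 ≤ n then D.x ^ n.toNat else D.y ^ (-n).toNat

lemma w_natCast (n : ℕ) : D.w n = D.x ^ n := by simp [w]

lemma w_neg_natCast (n : ℕ) : D.w (-n) = D.y ^ n := by
  rcases Nat.eq_zero_or_pos n with rfl | h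
  · simp [w]
  · have : ¬ (0 : ℤ) ≤ -(n : ℤ) := by omega
    rw [w, if_neg this]
    simp

lemma z_mem : (D.z : B) ∈ D.R := Algebra.subset_adjoin (by simp)

/-! ### The decomposition into homogeneous components -/

lemma R_comm_z {r : B} (hr : r ∈ D.R) : r * D.z = D.z * r := by
  induction hr using Algebra.adjoin_induction with
  | mem a ha =>
    have hzs := D.zs
    have hzt := D.zt
    simp only [Set.mem_insert_iff, Set.mem_singleton_iff] at ha
    rcases ha with rfl | rfl | rfl | rfl | rfl | rfl
    · rfl
    · simp
    · exact hzs.symm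
    · exact (hzs.units_inv_right).symm
    · exact hzt.symm
    · exact (hzt.units_inv_right).symm
  | algebraMap c => exact Algebra.commutes c _
  | add a b _ _ ha hb => rw [add_mul, mul_add, ha, hb]
  | mul a b _ _ ha hb => rw [mul_assoc, hb, ← mul_assoc, ha, mul_assoc]

lemma yz : D.y * D.z = P⁻¹ • ((D.z : B) * D.y) := skew_flip D.hP D.zy

/-- An element that skew-commutes with `z` and commutes with `s, t` normalizes `R`. -/
lemma R_normal {a : B} {c : F} (hc : c ≠ 0) (h : a * D.z = c • ((D.z : B) * a))
    (hs : Commute (D.s : B) a) (ht : Commute (D.t : B) a) {r : B} (hr : r ∈ D.R) :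
    ∃ r' ∈ D.R, a * r = r' * a := by
  induction hr using Algebra.adjoin_induction with
  | mem b hb =>
    simp only [Set.mem_insert_iff, Set.mem_singleton_iff] at hb
    rcases hb with rfl | rfl | rfl | rfl | rfl | rfl
    · exact ⟨c • D.z, D.R.smul_mem D.z_mem c, by rw [h, smul_mul_assoc]⟩
    · refine ⟨c⁻¹ • ((D.z⁻¹ : Bˣ) : B),
        D.R.smul_mem (Algebra.subset_adjoin (by simp)) _, ?_⟩
      have := skew_zpow hc h (-1)
      simpa using this
    · exact ⟨_, Algebra.subset_adjoin (by simp), hs.symm⟩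
    · exact ⟨_, Algebra.subset_adjoin (by simp), hs.symm.units_inv_right⟩
    · exact ⟨_, Algebra.subset_adjoin (by simp), ht.symm⟩
    · exact ⟨_, Algebra.subset_adjoin (by simp), ht.symm.units_inv_right⟩
  | algebraMap d => exact ⟨_, D.R.algebraMap_mem d, (Algebra.commutes d _).symm⟩
  | add b b' _ _ hb hb' =>
    obtain ⟨r, hr, e⟩ := hb
    obtain ⟨r', hr', e'⟩ := hb'
    exact ⟨r + r', D.R.add_mem hr hr', by rw [mul_add, e, e', add_mul]⟩
  | mul b b' _ _ hb hb' =>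
    obtain ⟨r, hr, e⟩ := hb
    obtain ⟨r', hr', e'⟩ := hb'
    exact ⟨r * r', D.R.mul_mem hr hr', by rw [← mul_assoc, e, mul_assoc, e', mul_assoc]⟩

/-- The homogeneous component `R w_n` of degree `n`. -/
def W (n : ℤ) : Submodule F B := (Subalgebra.toSubmodule D.R).map (LinearMap.mulRight F (D.w n))

lemma mem_W {n : ℤ} {a : B} : a ∈ D.W n ↔ ∃ r ∈ D.R, a = r * D.w n := by
  simp [W, Submodule.mem_map, eq_comm]

lemma R_mul_W {n : ℤ} {r a : B} (hr : r ∈ D.R) (ha : a ∈ D.W n) : r * a ∈ D.W n := by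
  obtain ⟨r', hr', rfl⟩ := D.mem_W.1 ha
  exact D.mem_W.2 ⟨r * r', D.R.mul_mem hr hr', by rw [mul_assoc]⟩

lemma x_mul_w (n : ℤ) : D.x * D.w n ∈ D.W (n + 1) := by
  rw [mem_W]
  obtain ⟨m, rfl | rfl⟩ := n.eq_nat_or_neg
  · refine ⟨1, D.R.one_mem, ?_⟩
    have : ((m : ℤ) + 1) = ((m + 1 : ℕ) : ℤ) := by push_cast; rfl
    rw [this, w_natCast, w_natCast, one_mul, pow_succ']
  · cases m with
    | zero =>
      refine ⟨1, D.R.one_mem, ?_⟩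
      have := D.w_natCast 1
      have h0 := D.w_natCast 0
      simp at this h0 ⊢
      rw [this, h0, mul_one]
    | succ m =>
      refine ⟨(P - 1)⁻¹ • (P • (D.z : B) - 1),
        D.R.smul_mem (D.R.sub_mem (D.R.smul_mem D.z_mem _) D.R.one_mem) _, ?_⟩
      have : (-((m + 1 : ℕ) : ℤ) + 1) = -(m : ℤ) := by push_cast; ring
      rw [this, w_neg_natCast, w_neg_natCast, pow_succ', ← mul_assoc, D.xy]

lemma y_mul_w (n : ℤ) : D.y * D.w n ∈ D.W (n - 1) := by
  rw [mem_W]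
  obtain ⟨m, rfl | rfl⟩ := n.eq_nat_or_neg
  · cases m with
    | zero =>
      refine ⟨1, D.R.one_mem, ?_⟩
      have := D.w_neg_natCast 1
      have h0 := D.w_natCast 0
      simp at this h0 ⊢
      rw [this, h0, mul_one]
    | succ m =>
      refine ⟨(P - 1)⁻¹ • ((D.z : B) - 1),
        D.R.smul_mem (D.R.sub_mem D.z_mem D.R.one_mem) _, ?_⟩
      have : (((m + 1 : ℕ) : ℤ) - 1) = (m : ℤ) := by push_cast; ring
      rw [this, w_natCast, w_natCast, pow_succ', ← mul_assoc, D.yx]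
  · refine ⟨1, D.R.one_mem, ?_⟩
    have : (-(m : ℤ) - 1) = -((m + 1 : ℕ) : ℤ) := by push_cast; ring
    rw [this, w_neg_natCast, w_neg_natCast, one_mul, pow_succ']

lemma x_mul_W {n : ℤ} {a : B} (ha : a ∈ D.W n) : D.x * a ∈ D.W (n + 1) := by
  obtain ⟨r, hr, rfl⟩ := D.mem_W.1 ha
  obtain ⟨r', hr', e⟩ := D.R_normal D.hP D.xz D.sx D.tx hr
  rw [← mul_assoc, e, mul_assoc]
  exact D.R_mul_W hr' (D.x_mul_w n)

lemma y_mul_W {n : ℤ} {a : B} (ha : a ∈ D.W n) : D.y * a ∈ D.W (n - 1) := by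
  obtain ⟨r, hr, rfl⟩ := D.mem_W.1 ha
  obtain ⟨r', hr', e⟩ := D.R_normal (inv_ne_zero D.hP) D.yz D.sy D.ty hr
  rw [← mul_assoc, e, mul_assoc]
  exact D.R_mul_W hr' (D.y_mul_w n)

lemma iSup_W : ⨆ n, D.W n = ⊤ := by
  have lift : ∀ (a : B) (f : ℤ → ℤ), (∀ n, ∀ m ∈ D.W n, a * m ∈ D.W (f n)) →
      ∀ m ∈ ⨆ n, D.W n, a * m ∈ ⨆ n, D.W n := by
    intro a f hf m hm
    induction hm using Submodule.iSup_induction' with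
    | mem n m hm => exact Submodule.mem_iSup_of_mem _ (hf n m hm)
    | zero => simp
    | add m m' _ _ hm hm' => rw [mul_add]; exact Submodule.add_mem _ hm hm'
  have key : ∀ a : B, ∀ m ∈ ⨆ n, D.W n, a * m ∈ ⨆ n, D.W n := by
    intro a
    have ha : a ∈ Algebra.adjoin F _ := D.gen ▸ Algebra.mem_top
    induction ha using Algebra.adjoin_induction with
    | mem a ha =>
      rw [Set.mem_insert_iff, Set.mem_insert_iff] at ha
      rcases ha with rfl | rfl | ha
      · exact lift _ _ fun n m hm => D.x_mul_W hm
      · exact lift _ _ fun n m hm => D.y_mul_W hm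
      · exact lift _ id fun n m hm => D.R_mul_W (Algebra.subset_adjoin ha) hm
    | algebraMap c =>
      intro m hm
      rw [← Algebra.smul_def]
      exact Submodule.smul_mem _ _ hm
    | add a b _ _ ha hb =>
      intro m hm
      rw [add_mul]
      exact Submodule.add_mem _ (ha m hm) (hb m hm)
    | mul a b _ _ ha hb =>
      intro m hm
      rw [mul_assoc]
      exact ha _ (hb m hm)
  rw [eq_top_iff]
  intro a _
  rw [← mul_one a]
  refine key a 1 (Submodule.mem_iSup_of_mem 0 (D.mem_W.2 ⟨1, D.R.one_mem, ?_⟩))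
  simp [w]

lemma w_z (n : ℤ) : D.w n * D.z = P ^ n • ((D.z : B) * D.w n) := by
  have gen : ∀ (a : B) (c : F), a * D.z = c • ((D.z : B) * a) → ∀ m : ℕ,
      a ^ m * D.z = c ^ m • ((D.z : B) * a ^ m) := by
    intro a c h m
    induction m with
    | zero => simp
    | succ m ih =>
      rw [pow_succ, mul_assoc, h, mul_smul_comm, ← mul_assoc, ih, smul_mul_assoc, smul_smul,
        mul_assoc, pow_succ' c]
  obtain ⟨m, rfl | rfl⟩ := n.eq_nat_or_neg
  · rw [w_natCast, zpow_natCast, gen _ _ D.xz]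
  · rw [w_neg_natCast, zpow_neg, zpow_natCast, gen _ _ D.yz, inv_pow]

lemma W_z {n : ℤ} {a : B} (ha : a ∈ D.W n) : a * D.z = P ^ n • ((D.z : B) * a) := by
  obtain ⟨r, hr, rfl⟩ := D.mem_W.1 ha
  rw [mul_assoc, w_z, mul_smul_comm, ← mul_assoc, D.R_comm_z hr, mul_assoc]

lemma exists_decomp (a : B) : ∃ f : ℤ →₀ B, (∀ n, f n ∈ D.W n) ∧ ∑ n ∈ f.support, f n = a := by
  have : a ∈ ⨆ n, D.W n := D.iSup_W ▸ Submodule.mem_top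
  obtain ⟨f, hf, h⟩ := (Submodule.mem_iSup_iff_exists_finsupp ..).1 this
  exact ⟨f, hf, h⟩

/-- An element skew-commuting with a power `z^i` lies in a single homogeneous component, because
`z^i` skew-commutes with the degree `n` component with factor `P^(n i)`. -/
lemma homog {a : B} (ha : a ≠ 0) {i m : ℤ} (him : i ≠ 0 ∨ m ≠ 0)
    (h : a * (D.z ^ i : Bˣ) = P ^ m • (((D.z ^ i : Bˣ) : B) * a)) :
    ∃ n, n * i = m ∧ a ∈ D.W n := by
  obtain ⟨f, hf, rfl⟩ := D.exists_decomp a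
  have hfi : ∀ n, f n * (D.z ^ i : Bˣ) = P ^ (n * i) • (((D.z ^ i : Bˣ) : B) * f n) := by
    intro n
    rw [skew_zpow (zpow_ne_zero n D.hP) (D.W_z (hf n)) i, zpow_mul]
  have h0 : ∑ n ∈ f.support, (P ^ (n * i) - P ^ m) • f n = 0 := by
    have : ((D.z ^ i : Bˣ) : B) * ∑ n ∈ f.support, (P ^ (n * i) - P ^ m) • f n = 0 := by
      rw [Finset.mul_sum]
      rw [Finset.sum_mul, Finset.mul_sum, Finset.smul_sum, ← sub_eq_zero,
        ← Finset.sum_sub_distrib] at h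
      rw [← h]
      refine Finset.sum_congr rfl fun n _ => ?_
      rw [hfi, mul_smul_comm, sub_smul]
    simpa using this
  have h1 := skew_indep D.hP D.hPr D.z f.support (fun n => (P ^ (n * i) - P ^ m) • f n)
    (fun n _ => by rw [smul_mul_assoc, D.W_z (hf n), mul_smul_comm, smul_comm]) h0
  have h2 : ∀ n ∈ f.support, n * i = m := by
    intro n hn
    have := (smul_eq_zero.1 (h1 n hn)).resolve_right (Finsupp.mem_support_iff.1 hn)
    exact zpow_inj_of_not_root D.hP D.hPr (sub_eq_zero.1 this)
  have hne : f.support.Nonempty := by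
    rw [Finset.nonempty_iff_ne_empty]
    intro h'
    simp [h'] at ha
  obtain ⟨n, hn⟩ := hne
  have hi : i ≠ 0 := by
    rintro rfl
    have := h2 n hn
    simp at him
    simp at this
    exact him this.symm
  refine ⟨n, h2 n hn, ?_⟩
  rw [Finset.sum_eq_single_of_mem n hn]
  · exact hf n
  · intro k hk hkn
    exact absurd (mul_right_cancel₀ hi ((h2 k hk).trans (h2 n hn).symm)) hkn

/-! ### Injectivity of the homomorphism to the quantum torus -/

lemma mono_mul (u v : ℤ × ℤ × ℤ) :
    (D.mono u : B) * D.mono v = Q ^ (-(u.2.2 * v.2.1)) • (D.mono (u + v) : B) := by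
  have hts : (D.t : B) * D.s = Q⁻¹ • ((D.s : B) * D.t) := skew_flip D.hQ D.st
  have h1 := skew_zpow_zpow (inv_ne_zero D.hQ) hts u.2.2 v.2.1
  rw [inv_zpow, ← zpow_neg] at h1
  have hzs : Commute D.z D.s := Units.ext D.zs
  have hzt : Commute D.z D.t := Units.ext D.zt
  have h2 : D.mono u * D.mono v = D.z ^ (u.1 + v.1) * (D.s ^ u.2.1 *
      (D.t ^ u.2.2 * D.s ^ v.2.1) * D.t ^ v.2.2) := by
    simp only [mono]
    have e1 := (hzs.zpow_zpow v.1 u.2.1).eq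
    have e2 := (hzt.zpow_zpow v.1 u.2.2).eq
    calc D.z ^ u.1 * D.s ^ u.2.1 * D.t ^ u.2.2 * (D.z ^ v.1 * D.s ^ v.2.1 * D.t ^ v.2.2)
        = D.z ^ u.1 * D.s ^ u.2.1 * (D.t ^ u.2.2 * D.z ^ v.1) * D.s ^ v.2.1 * D.t ^ v.2.2 := by
          simp only [mul_assoc]
      _ = D.z ^ u.1 * (D.s ^ u.2.1 * D.z ^ v.1) * D.t ^ u.2.2 * D.s ^ v.2.1 * D.t ^ v.2.2 := by
          rw [← e2]; simp only [mul_assoc]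
      _ = _ := by rw [← e1, zpow_add]; simp only [mul_assoc]
  rw [← Units.val_mul, h2]
  simp only [Units.val_mul]
  rw [h1]
  simp only [mono, Prod.fst_add, Prod.snd_add, zpow_add, Units.val_mul, mul_smul_comm,
    smul_mul_assoc, mul_assoc]

lemma R_le_span : Subalgebra.toSubmodule D.R ≤
    Submodule.span F (Set.range fun v => (D.mono v : B)) := by
  intro r hr
  rw [Subalgebra.mem_toSubmodule] at hr
  induction hr using Algebra.adjoin_induction with
  | mem a ha =>
    apply Submodule.subset_span
    simp only [Set.mem_insert_iff, Set.mem_singleton_iff] at ha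
    rcases ha with rfl | rfl | rfl | rfl | rfl | rfl
    · exact ⟨(1, 0, 0), by simp [mono]⟩
    · exact ⟨(-1, 0, 0), by simp [mono]⟩
    · exact ⟨(0, 1, 0), by simp [mono]⟩
    · exact ⟨(0, -1, 0), by simp [mono]⟩
    · exact ⟨(0, 0, 1), by simp [mono]⟩
    · exact ⟨(0, 0, -1), by simp [mono]⟩
  | algebraMap c =>
    rw [Algebra.algebraMap_eq_smul_one]
    exact Submodule.smul_mem _ _ (Submodule.subset_span ⟨0, by simp [mono]⟩)
  | add a b _ _ ha hb => exact Submodule.add_mem _ ha hb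
  | mul a b ha' hb' ha hb =>
    clear ha' hb'
    induction ha, hb using Submodule.span_induction₂ with
    | mem_mem a b ha hb =>
      obtain ⟨u, rfl⟩ := ha
      obtain ⟨v, rfl⟩ := hb
      simp only [mono_mul]
      exact Submodule.smul_mem _ _ (Submodule.subset_span ⟨_, rfl⟩)
    | zero_left => simp
    | zero_right => simp
    | add_left a b c _ _ _ h h' => rw [add_mul]; exact Submodule.add_mem _ h h'
    | add_right a b c _ _ _ h h' => rw [mul_add]; exact Submodule.add_mem _ h h'
    | smul_left c a b _ _ h => rw [smul_mul_assoc]; exact Submodule.smul_mem _ _ h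
    | smul_right c a b _ _ h => rw [mul_smul_comm]; exact Submodule.smul_mem _ _ h

lemma mono_mem (v : ℤ × ℤ × ℤ) : (D.mono v : B) ∈ D.R := by
  have key : ∀ u : Bˣ, (u : B) ∈ D.R → ((u⁻¹ : Bˣ) : B) ∈ D.R → ∀ i : ℤ,
      ((u ^ i : Bˣ) : B) ∈ D.R := by
    intro u h h' i
    obtain ⟨m, rfl | rfl⟩ := i.eq_nat_or_neg
    · simpa using D.R.pow_mem h m
    · rw [zpow_neg, ← inv_zpow]
      simpa using D.R.pow_mem h' m
  simp only [mono, Units.val_mul]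
  refine D.R.mul_mem (D.R.mul_mem ?_ ?_) ?_ <;> apply key <;>
    exact Algebra.subset_adjoin (by simp)

lemma twOp_torus_mul (hP : P ≠ 0) (hQ : Q ≠ 0) (u v : ℤ × ℤ × ℤ × ℤ) :
    twOp (torusCocycle P Q) u * twOp (torusCocycle P Q) v =
      torusCocycle P Q u v • twOp (torusCocycle P Q) (u + v) :=
  twOp_mul (cocycle_left hP hQ) (cocycle_right hP hQ) u v

lemma ρ_zpow (u : Bˣ) (v : ℤ × ℤ × ℤ × ℤ) (h : D.ρ u = twOp (torusCocycle P Q) v)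
    (hv : ∀ i j : ℤ, torusCocycle P Q (i • v) (j • v) = 1) (i : ℤ) :
    D.ρ ((u ^ i : Bˣ) : B) = twOp (torusCocycle P Q) (i • v) := by
  let f : Multiplicative ℤ →* Module.End F ((ℤ × ℤ × ℤ × ℤ) →₀ F) :=
    { toFun := fun i => twOp (torusCocycle P Q) (i.toAdd • v)
      map_one' := by
        simp only [toAdd_one, zero_smul]
        exact twOp_zero cocycle_zero_left
      map_mul' := fun i j => by
        simp only [toAdd_mul, add_smul]
        rw [twOp_torus_mul D.hP D.hQ, hv, one_smul] }
  let g : Multiplicative ℤ →* Module.End F ((ℤ × ℤ × ℤ × ℤ) →₀ F) :=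
    (D.ρ : B →* _).comp ((Units.coeHom B).comp (zpowersHom Bˣ u))
  have hfg : g = f := by
    apply MonoidHom.ext_mint
    simp [f, g, h]
  have := DFunLike.congr_fun hfg (Multiplicative.ofAdd i)
  simpa [f, g] using this

lemma ρ_mono (v : ℤ × ℤ × ℤ) :
    D.ρ (D.mono v) = twOp (torusCocycle P Q) (v.1, v.2.1, v.2.2, 0) := by
  simp only [mono, Units.val_mul, map_mul]
  rw [D.ρ_zpow _ _ D.ρz (by simp [torusCocycle]), D.ρ_zpow _ _ D.ρs (by simp [torusCocycle]),
    D.ρ_zpow _ _ D.ρt (by simp [torusCocycle]), twOp_torus_mul D.hP D.hQ, smul_mul_assoc,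
    twOp_torus_mul D.hP D.hQ]
  simp [torusCocycle]

lemma ρ_mem_range (a : B) : ∃ f, D.ρ a = twMul (torusCocycle P Q) f := by
  have ha : a ∈ Algebra.adjoin F _ := D.gen ▸ Algebra.mem_top
  induction ha using Algebra.adjoin_induction with
  | mem a ha =>
    rw [Set.mem_insert_iff, Set.mem_insert_iff] at ha
    rcases ha with rfl | rfl | ha
    · exact ⟨single (0, 0, 0, 1) 1, by rw [twMul_single, one_smul, D.ρx]⟩
    · exact ⟨_, D.ρy⟩
    · have hm : ∀ v, ∃ f, D.ρ (D.mono v) = twMul (torusCocycle P Q) f := fun v =>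
        ⟨single _ 1, by rw [ρ_mono, twMul_single, one_smul]⟩
      simp only [Set.mem_insert_iff, Set.mem_singleton_iff] at ha
      rcases ha with rfl | rfl | rfl | rfl | rfl | rfl
      · simpa [mono] using hm (1, 0, 0)
      · simpa [mono] using hm (-1, 0, 0)
      · simpa [mono] using hm (0, 1, 0)
      · simpa [mono] using hm (0, -1, 0)
      · simpa [mono] using hm (0, 0, 1)
      · simpa [mono] using hm (0, 0, -1)
  | algebraMap c =>
    exact ⟨single 0 c, by
      rw [twMul_single, twOp_zero cocycle_zero_left, AlgHom.commutes,
        Algebra.algebraMap_eq_smul_one]⟩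
  | add a b _ _ ha hb =>
    obtain ⟨f, hf⟩ := ha
    obtain ⟨g, hg⟩ := hb
    exact ⟨f + g, by rw [map_add, map_add, hf, hg]⟩
  | mul a b _ _ ha hb =>
    obtain ⟨f, hf⟩ := ha
    obtain ⟨g, hg⟩ := hb
    exact ⟨_, by rw [map_mul, hf, hg, twMul_mul (cocycle_left D.hP D.hQ)
      (cocycle_right D.hP D.hQ)]⟩

/-- The image of an element in the quantum torus, read off by applying it to the unit element. -/
def ev (a : B) : (ℤ × ℤ × ℤ × ℤ) →₀ F := D.ρ a (single 0 1)

lemma ρ_eq (a : B) : D.ρ a = twMul (torusCocycle P Q) (D.ev a) := by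
  obtain ⟨f, hf⟩ := D.ρ_mem_range a
  rw [ev, hf, twMul_eval cocycle_zero_right]

lemma ev_mul (a b : B) : D.ev (a * b) = twMul (torusCocycle P Q) (D.ev a) (D.ev b) := by
  rw [← ρ_eq, ev, map_mul, Module.End.mul_apply, ev]

lemma ev_eq_zero_of_mul {a b : B} (h : D.ev (a * b) = 0) : D.ev a = 0 ∨ D.ev b = 0 := by
  rw [ev_mul] at h
  exact twMul_eq_zero (cocycle_ne D.hP D.hQ) _ _ h

lemma ev_mono (v : ℤ × ℤ × ℤ) : D.ev (D.mono v) = single (v.1, v.2.1, v.2.2, 0) 1 := by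
  rw [ev, ρ_mono, twOp_single, cocycle_zero_right]
  simp

lemma ev_x : D.ev D.x = single (0, 0, 0, 1) 1 := by
  rw [ev, D.ρx, twOp_single, cocycle_zero_right]
  simp

lemma ev_y : D.ev D.y = single (1, 0, 0, -1) (P - 1)⁻¹ - single (0, 0, 0, -1) (P - 1)⁻¹ := by
  rw [ev, D.ρy, twMul_eval cocycle_zero_right]

lemma ev_one : D.ev 1 = single 0 1 := by simp [ev]

lemma ev_y_not_monomial (a : ℤ × ℤ × ℤ × ℤ) (d : F) : D.ev D.y ≠ single a d := by
  intro h
  rw [ev_y] at h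
  have hP := inv_ne_zero D.P_sub_one_ne
  have h1 := DFunLike.congr_fun h (1, 0, 0, -1)
  have h2 := DFunLike.congr_fun h (0, 0, 0, -1)
  simp [single_apply] at h1 h2
  have hP' := D.P_sub_one_ne
  by_cases h3 : a = (1, 0, 0, -1)
  · subst h3
    simp at h2
    exact hP' h2
  · rw [if_neg h3] at h1
    exact hP' (by simpa using h1)

lemma eq_zero_of_mem_R {r : B} (hr : r ∈ D.R) (h : D.ev r = 0) : r = 0 := by
  have hs := D.R_le_span hr
  rw [Finsupp.mem_span_range_iff_exists_finsupp] at hs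
  obtain ⟨c, rfl⟩ := hs
  let ι : ℤ × ℤ × ℤ → ℤ × ℤ × ℤ × ℤ := fun v => (v.1, v.2.1, v.2.2, 0)
  have hι : Function.Injective ι := by
    rintro ⟨a, b, c⟩ ⟨a', b', c'⟩ h
    simpa [ι] using h
  have h1 : D.ev (c.sum fun i a => a • (D.mono i : B)) = c.mapDomain ι := by
    have : ∀ v, D.ρ (D.mono v : B) (single 0 1) = single (ι v) 1 := D.ev_mono
    simp [ev, Finsupp.sum, mapDomain, this, smul_single]
  rw [h1] at h
  have : c = 0 := mapDomain_injective hι (by rw [h, mapDomain_zero])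
  simp [this]

lemma ev_w_ne_zero (n : ℤ) : D.ev (D.w n) ≠ 0 := by
  have gen : ∀ a, D.ev a ≠ 0 → ∀ m : ℕ, D.ev (a ^ m) ≠ 0 := by
    intro a ha m
    induction m with
    | zero => simp [ev_one]
    | succ m ih =>
      rw [pow_succ]
      intro h
      exact (D.ev_eq_zero_of_mul h).elim ih ha
  obtain ⟨m, rfl | rfl⟩ := n.eq_nat_or_neg
  · rw [w_natCast]
    exact gen _ (by simp [ev_x]) m
  · rw [w_neg_natCast]
    refine gen _ (fun h => D.ev_y_not_monomial 0 0 ?_) m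
    rw [h, single_zero]

lemma ρ_injective : Function.Injective D.ρ := by
  rw [injective_iff_map_eq_zero]
  intro a ha
  obtain ⟨f, hf, rfl⟩ := D.exists_decomp a
  rw [map_sum] at ha
  have h := skew_indep D.hP D.hPr (Units.map (D.ρ : B →* _) D.z) f.support (fun n => D.ρ (f n))
    (fun n _ => by
      simp only [Units.coe_map, MonoidHom.coe_coe]
      rw [← map_mul, D.W_z (hf n), map_smul, map_mul]) ha
  refine Finset.sum_eq_zero fun n hn => ?_
  obtain ⟨r, hr, e⟩ := D.mem_W.1 (hf n)
  have h1 : D.ev (f n) = 0 := by simp [ev, h n hn]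
  rw [e] at h1
  rw [e, D.eq_zero_of_mem_R hr ((D.ev_eq_zero_of_mul h1).resolve_right (D.ev_w_ne_zero n)),
    zero_mul]

lemma ev_injective {a b : B} (h : D.ev a = D.ev b) : a = b := by
  apply D.ρ_injective
  rw [ρ_eq, ρ_eq, h]

/-! ### Units -/

lemma ev_factor {a b : B} {v : ℤ × ℤ × ℤ × ℤ} {c : F} (hc : c ≠ 0)
    (h : D.ev (a * b) = single v c) :
    (∃ u d, d ≠ 0 ∧ D.ev a = single u d) ∧ (∃ u d, d ≠ 0 ∧ D.ev b = single u d) := by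
  rw [ev_mul] at h
  exact twMul_eq_monomial (cocycle_ne D.hP D.hQ) _ _ v c hc h

lemma ev_unit (u : Bˣ) : ∃ v d, d ≠ 0 ∧ D.ev (u : B) = single v d := by
  refine (D.ev_factor (a := (u : B)) (b := ((u⁻¹ : Bˣ) : B)) (v := 0) one_ne_zero ?_).1
  rw [Units.mul_inv, ev_one]

/-- No unit has negative degree: its image would be a monomial with `y` as a factor. -/
lemma unit_not_mem_W (u : Bˣ) {n : ℤ} (hn : n < 0) : (u : B) ∉ D.W n := by
  intro h
  obtain ⟨r, -, e⟩ := D.mem_W.1 h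
  obtain ⟨m, rfl⟩ : ∃ m : ℕ, n = -((m + 1 : ℕ) : ℤ) := ⟨(-n - 1).toNat, by omega⟩
  rw [w_neg_natCast, pow_succ, ← mul_assoc] at e
  obtain ⟨v, d, hd, hv⟩ := D.ev_unit u
  rw [e] at hv
  obtain ⟨v', d', -, h'⟩ := (D.ev_factor hd hv).2
  exact D.ev_y_not_monomial _ _ h'

lemma skew_inv {u : Bˣ} {a : B} {c : F} (hc : c ≠ 0) (h : (u : B) * a = c • (a * (u : B))) :
    ((u⁻¹ : Bˣ) : B) * a = c⁻¹ • (a * ((u⁻¹ : Bˣ) : B)) := by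
  have h1 := skew_flip (zpow_ne_zero (-1) (inv_ne_zero hc))
    (skew_zpow (inv_ne_zero hc) (skew_flip hc h) (-1))
  simpa using h1

lemma unit_form (u : Bˣ) : ∃ (c : Fˣ) (v : ℤ × ℤ × ℤ), (u : B) = (c : F) • (D.mono v : B) := by
  have : Nontrivial B := D.ρ.toRingHom.domain_nontrivial
  obtain ⟨⟨i, j, k, n⟩, d, hd, hv⟩ := D.ev_unit u
  have hz : (u : B) * D.z = P ^ n • ((D.z : B) * u) := by
    apply D.ρ_injective
    rw [map_mul, map_smul, map_mul, D.ρ_eq u, hv, twMul_single, D.ρz, smul_mul_assoc,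
      mul_smul_comm, twOp_torus_mul D.hP D.hQ, twOp_torus_mul D.hP D.hQ]
    simp [torusCocycle, smul_smul, add_comm, mul_comm]
  have hz' := skew_inv (zpow_ne_zero n D.hP) hz
  rw [← zpow_neg] at hz'
  -- Taking `i = 1` in `homog`, the degrees of `u` and `u⁻¹` are `n` and `-n`.
  obtain ⟨n1, e1, hu⟩ := D.homog u.ne_zero (i := 1) (m := n) (Or.inl one_ne_zero) (by simpa using hz)
  obtain ⟨n2, e2, hu'⟩ := D.homog (u⁻¹).ne_zero (i := 1) (m := -n) (Or.inl one_ne_zero)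
    (by simpa using hz')
  rw [mul_one] at e1 e2
  subst e1 e2
  have hn : n1 = 0 := by
    rcases lt_trichotomy n1 0 with h | h | h
    · exact absurd hu (D.unit_not_mem_W u h)
    · exact h
    · exact absurd hu' (D.unit_not_mem_W _ (by omega))
  subst hn
  refine ⟨Units.mk0 d hd, (i, j, k), D.ev_injective ?_⟩
  have : D.ev (d • (D.mono (i, j, k) : B)) = d • D.ev (D.mono (i, j, k) : B) := by simp [ev]
  rw [Units.val_mk0, this, ev_mono, hv]
  simp [smul_single]

/-! ### Endomorphisms -/

lemma mono_smul_inj [Nontrivial B] {v : ℤ × ℤ × ℤ} {c d : F}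
    (h : c • (D.mono v : B) = d • (D.mono v : B)) : c = d :=
  smul_left_injective F (D.mono v).ne_zero h

/-- The exponents of two monomials that commute up to the factor `Q ^ e`. -/
lemma mono_comm [Nontrivial B] {u v : ℤ × ℤ × ℤ} {a b : Fˣ} {e : ℤ}
    (h : ((a : F) • (D.mono u : B)) * ((b : F) • (D.mono v : B)) =
      Q ^ e • (((b : F) • (D.mono v : B)) * ((a : F) • (D.mono u : B)))) :
    u.2.1 * v.2.2 - u.2.2 * v.2.1 = e := by
  rw [smul_mul_smul_comm, smul_mul_smul_comm, mono_mul, mono_mul, add_comm v u, smul_smul,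
    smul_smul, smul_smul] at h
  have h1 := D.mono_smul_inj h
  have h2 : Q ^ (-(u.2.2 * v.2.1)) = Q ^ (e + -(v.2.2 * u.2.1)) := by
    rw [zpow_add₀ D.hQ]
    have hab : (a : F) * b ≠ 0 := mul_ne_zero a.ne_zero b.ne_zero
    apply mul_left_cancel₀ hab
    rw [h1]
    ring
  have h3 := zpow_inj_of_not_root D.hQ D.hQr h2
  linarith

theorem endo_form (φ : B →ₐ[F] B) :
    ((∃ g ∈ D.R, ∃ h ∈ D.R, ∃ α : Fˣ,
        φ D.x = g * D.x ∧ φ D.y = h * D.y ∧ φ D.z = (α : F) • (D.z : B)) ∨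
      (∃ g ∈ D.R, ∃ h ∈ D.R, ∃ α : Fˣ,
        φ D.x = g * D.y ∧ φ D.y = h * D.x ∧ φ D.z = (α : F) • ((D.z⁻¹ : Bˣ) : B))) ∧
    (∃ (β γ : Fˣ) (m n c d e f : ℤ), c * f - d * e = 1 ∧
      φ D.s = (β : F) • ((D.z ^ m * D.s ^ c * D.t ^ d : Bˣ) : B) ∧
      φ D.t = (γ : F) • ((D.z ^ n * D.s ^ e * D.t ^ f : Bˣ) : B)) := by
  have : Nontrivial B := D.ρ.toRingHom.domain_nontrivial
  obtain ⟨α, ⟨i, j, k⟩, hz⟩ := D.unit_form (Units.map (φ : B →* B) D.z)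
  obtain ⟨β, ⟨m, c, d⟩, hs⟩ := D.unit_form (Units.map (φ : B →* B) D.s)
  obtain ⟨γ, ⟨n, e, f⟩, ht⟩ := D.unit_form (Units.map (φ : B →* B) D.t)
  simp only [Units.coe_map, MonoidHom.coe_coe] at hz hs ht
  have hdet : c * f - d * e = 1 := by
    refine D.mono_comm (u := (m, c, d)) (v := (n, e, f)) (a := β) (b := γ) ?_
    rw [← hs, ← ht, ← map_mul, D.st, map_smul, map_mul, zpow_one]
  have h1 : j * d - k * c = 0 := by
    refine D.mono_comm (u := (i, j, k)) (v := (m, c, d)) (a := α) (b := β) ?_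
    rw [← hs, ← hz, ← map_mul, D.zs.eq, map_mul, zpow_zero, one_smul]
  have h2 : j * f - k * e = 0 := by
    refine D.mono_comm (u := (i, j, k)) (v := (n, e, f)) (a := α) (b := γ) ?_
    rw [← ht, ← hz, ← map_mul, D.zt.eq, map_mul, zpow_zero, one_smul]
  obtain rfl : j = 0 := by linear_combination (-j) * hdet + c * h2 - e * h1
  obtain rfl : k = 0 := by linear_combination (-k) * hdet + d * h2 - f * h1
  have hz' : φ D.z = (α : F) • ((D.z ^ i : Bˣ) : B) := by simpa [mono] using hz
  refine ⟨?_, β, γ, m, n, c, d, e, f, hdet, hs, ht⟩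
  have hweyl : φ D.x * φ D.y - P • (φ D.y * φ D.x) = 1 := by
    rw [← map_mul, ← map_mul, ← map_smul, ← map_sub, D.weyl, map_one]
  have hx0 : φ D.x ≠ 0 := by
    intro h
    simp [h] at hweyl
  have hy0 : φ D.y ≠ 0 := by
    intro h
    simp [h] at hweyl
  -- Cancelling the scalar `α` from the relations between `φ z` and `φ x`, `φ y`.
  have cancel : ∀ (a : B) (r : F), φ a * φ D.z = r • (φ D.z * φ a) →
      φ a * (D.z ^ i : Bˣ) = r • (((D.z ^ i : Bˣ) : B) * φ a) := by
    intro a r h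
    rw [hz', mul_smul_comm, smul_mul_assoc, smul_comm r] at h
    exact smul_right_injective B α.ne_zero h
  have hxz := cancel D.x P (by rw [← map_mul, D.xz, map_smul, map_mul])
  have hyz := cancel D.y P⁻¹ (by rw [← map_mul, D.yz, map_smul, map_mul])
  obtain ⟨a, ha, hxW⟩ := D.homog hx0 (m := 1) (Or.inr one_ne_zero) (by simpa using hxz)
  obtain ⟨b, hb, hyW⟩ := D.homog hy0 (m := -1) (Or.inr (by simp)) (by simpa using hyz)
  obtain ⟨g, hg, hxg⟩ := D.mem_W.1 hxW
  obtain ⟨h, hh, hyh⟩ := D.mem_W.1 hyW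
  have w1 : D.w 1 = D.x := by simpa using D.w_natCast 1
  have w2 : D.w (-1) = D.y := by simpa using D.w_neg_natCast 1
  rcases Int.eq_one_or_neg_one_of_mul_eq_one' ha with ⟨rfl, rfl⟩ | ⟨rfl, rfl⟩
  · obtain rfl : b = -1 := by omega
    rw [w1] at hxg
    rw [w2] at hyh
    exact Or.inl ⟨g, hg, h, hh, α, hxg, hyh, by simpa using hz'⟩
  · obtain rfl : b = 1 := by omega
    rw [w2] at hxg
    rw [w1] at hyh
    exact Or.inr ⟨g, hg, h, hh, α, hxg, hyh, by simpa using hz'⟩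

end LocModel

end Model

/-! ### The localization as an instance of the abstract situation -/

set_option linter.unusedSectionVars false

section Relations

lemma wx_wy : wx K p q * wy K p q - p • (wy K p q * wx K p q) = 1 := by
  have := RingQuot.mkAlgHom_rel K (ExtWeylRel.weyl (K := K) (p := p) (q := q) (lam := 1) (mu := 1))
  simpa [wx, wy] using this

lemma ws_wt : ws K p q * wt K p q = q • (wt K p q * ws K p q) := by
  have := RingQuot.mkAlgHom_rel K (ExtWeylRel.st (K := K) (p := p) (q := q) (lam := 1) (mu := 1))
  simpa [ws, wt] using this

lemma ws_wx : Commute (ws K p q) (wx K p q) := by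
  have := RingQuot.mkAlgHom_rel K (ExtWeylRel.sx (K := K) (p := p) (q := q) (lam := 1) (mu := 1))
  rw [commute_iff_eq]
  simpa [ws, wx] using this

lemma ws_wy : Commute (ws K p q) (wy K p q) := by
  have := RingQuot.mkAlgHom_rel K (ExtWeylRel.sy (K := K) (p := p) (q := q) (lam := 1) (mu := 1))
  rw [commute_iff_eq]
  simpa [ws, wy] using this

lemma wt_wx : Commute (wt K p q) (wx K p q) := by
  have := RingQuot.mkAlgHom_rel K (ExtWeylRel.tx (K := K) (p := p) (q := q) (lam := 1) (mu := 1))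
  rw [commute_iff_eq]
  simpa [wt, wx] using this

lemma wt_wy : Commute (wt K p q) (wy K p q) := by
  have := RingQuot.mkAlgHom_rel K (ExtWeylRel.ty (K := K) (p := p) (q := q) (lam := 1) (mu := 1))
  rw [commute_iff_eq]
  simpa [wt, wy] using this

lemma wx_wy' : wx K p q * wy K p q = 1 + p • (wy K p q * wx K p q) := by
  rw [← wx_wy K p q, sub_add_cancel]

lemma wz_eq : wz K p q = 1 + (p - 1) • (wy K p q * wx K p q) := by
  rw [wz, wx_wy']
  module

lemma wx_wz : wx K p q * wz K p q = p • (wz K p q * wx K p q) := by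
  rw [wz_eq, mul_add, mul_smul_comm, ← mul_assoc, wx_wy', mul_one, add_mul, add_mul, one_mul,
    smul_mul_assoc, smul_mul_assoc]
  module

lemma wz_wy : wz K p q * wy K p q = p • (wy K p q * wz K p q) := by
  rw [wz_eq, add_mul, smul_mul_assoc, mul_assoc, wx_wy', mul_add, mul_add, mul_one, one_mul,
    mul_smul_comm, mul_smul_comm]
  module

lemma wz_ws : Commute (wz K p q) (ws K p q) := by
  have hx := (ws_wx K p q).symm
  have hy := (ws_wy K p q).symm
  exact (hx.mul_left hy).sub_left (hy.mul_left hx)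

lemma wz_wt : Commute (wz K p q) (wt K p q) := by
  have hx := (wt_wx K p q).symm
  have hy := (wt_wy K p q).symm
  exact (hx.mul_left hy).sub_left (hy.mul_left hx)

end Relations

section Torus

open Finsupp

variable {K p q}

section Generic

variable {E : Type*} [Ring E] [Algebra K E] {X A C Z S : E} (c : K)

lemma mul_smul_sub (hA : X * A = p • Z) (hC : X * C = 1) :
    X * (c • A - c • C) = c • (p • Z - 1) := by
  rw [mul_sub, mul_smul_comm, mul_smul_comm, hA, hC, smul_sub]

lemma smul_sub_mul (hA : A * X = Z) (hC : C * X = 1) :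
    (c • A - c • C) * X = c • (Z - 1) := by
  rw [sub_mul, smul_mul_assoc, smul_mul_assoc, hA, hC, smul_sub]

lemma comm_smul_sub (hA : S * A = A * S) (hC : S * C = C * S) :
    S * (c • A - c • C) = (c • A - c • C) * S := by
  rw [mul_sub, sub_mul, smul_mul_assoc, smul_mul_assoc, mul_smul_comm, mul_smul_comm, hA, hC]

lemma weyl_aux (hp1 : p - 1 ≠ 0) :
    (p - 1)⁻¹ • (p • Z - 1) - p • ((p - 1)⁻¹ • (Z - 1)) = 1 := by
  have h : (p - 1)⁻¹ • (p • Z - 1) - p • ((p - 1)⁻¹ • (Z - 1)) =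
      ((p - 1)⁻¹ * (p - 1)) • (1 : E) := by module
  rw [h, inv_mul_cancel₀ hp1, one_smul]

lemma wz_aux (hp1 : p - 1 ≠ 0) :
    (p - 1)⁻¹ • (p • Z - 1) - (p - 1)⁻¹ • (Z - 1) = Z := by
  have h : (p - 1)⁻¹ • (p • Z - 1) - (p - 1)⁻¹ • (Z - 1) = ((p - 1)⁻¹ * (p - 1)) • Z := by
    module
  rw [h, inv_mul_cancel₀ hp1, one_smul]

end Generic

/-- The images of `x, y, s, t` in the quantum torus on `z, s, t, x`; as `yx = (z - 1)/(p - 1)`, the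
image of `y` is `(z - 1) x⁻¹ / (p - 1)`. -/
def torusGen (p q : K) : Fin 4 → Module.End K ((ℤ × ℤ × ℤ × ℤ) →₀ K) :=
  ![twOp (torusCocycle p q) (0, 0, 0, 1),
    twMul (torusCocycle p q) (single (1, 0, 0, -1) (p - 1)⁻¹ - single (0, 0, 0, -1) (p - 1)⁻¹),
    twOp (torusCocycle p q) (0, 1, 0, 0), twOp (torusCocycle p q) (0, 0, 1, 0)]

lemma torusGen_one : torusGen p q 1 = (p - 1)⁻¹ • twOp (torusCocycle p q) (1, 0, 0, -1) -
    (p - 1)⁻¹ • twOp (torusCocycle p q) (0, 0, 0, -1) := by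
  simp only [torusGen, Matrix.cons_val, map_sub, twMul_single]

lemma torus_one : twOp (torusCocycle p q) (0, 0, 0, 0) = 1 :=
  twOp_zero LocModel.cocycle_zero_left

lemma torus_xy (hp : p ≠ 0) (hq : q ≠ 0) : torusGen p q 0 * torusGen p q 1 =
    (p - 1)⁻¹ • (p • twOp (torusCocycle p q) (1, 0, 0, 0) - 1) := by
  rw [torusGen_one]
  refine mul_smul_sub (K := K) (E := Module.End K ((ℤ × ℤ × ℤ × ℤ) →₀ K)) _ ?_ ?_
  · simp only [torusGen, Matrix.cons_val, LocModel.twOp_torus_mul hp hq]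
    simp [torusCocycle]
  · simp only [torusGen, Matrix.cons_val, LocModel.twOp_torus_mul hp hq]
    simp [torusCocycle, torus_one]

lemma torus_yx (hp : p ≠ 0) (hq : q ≠ 0) : torusGen p q 1 * torusGen p q 0 =
    (p - 1)⁻¹ • (twOp (torusCocycle p q) (1, 0, 0, 0) - 1) := by
  rw [torusGen_one]
  refine smul_sub_mul (K := K) (E := Module.End K ((ℤ × ℤ × ℤ × ℤ) →₀ K)) _ ?_ ?_
  · simp only [torusGen, Matrix.cons_val, LocModel.twOp_torus_mul hp hq]
    simp [torusCocycle]
  · simp only [torusGen, Matrix.cons_val, LocModel.twOp_torus_mul hp hq]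
    simp [torusCocycle, torus_one]

/-- The homomorphism from `A` to the quantum torus. -/
def torusHom (hp : p ≠ 0) (hq : q ≠ 0) (hp1 : p - 1 ≠ 0) :
    ExtWeyl K p q 1 1 →ₐ[K] Module.End K ((ℤ × ℤ × ℤ × ℤ) →₀ K) :=
  RingQuot.liftAlgHom K ⟨FreeAlgebra.lift K (torusGen p q), by
    intro a b h
    cases h with
    | weyl =>
      rw [map_sub, map_mul, map_smul, map_mul, map_one, FreeAlgebra.lift_ι_apply,
        FreeAlgebra.lift_ι_apply, torus_xy hp hq, torus_yx hp hq]
      exact weyl_aux (K := K) (E := Module.End K ((ℤ × ℤ × ℤ × ℤ) →₀ K)) hp1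
    | st =>
      simp only [map_mul, map_smul, FreeAlgebra.lift_ι_apply, torusGen, Matrix.cons_val,
        LocModel.twOp_torus_mul hp hq]
      simp [torusCocycle, smul_smul, hq]
    | sx | tx =>
      simp only [map_mul, map_smul, FreeAlgebra.lift_ι_apply, torusGen, Matrix.cons_val,
        LocModel.twOp_torus_mul hp hq]
      simp [torusCocycle]
    | sy | ty =>
      rw [inv_one, one_smul, map_mul, map_mul, FreeAlgebra.lift_ι_apply,
        FreeAlgebra.lift_ι_apply, torusGen_one]
      refine comm_smul_sub (K := K) (E := Module.End K ((ℤ × ℤ × ℤ × ℤ) →₀ K)) _ ?_ ?_ <;>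
      · simp only [torusGen, Matrix.cons_val, LocModel.twOp_torus_mul hp hq]
        simp [torusCocycle]⟩

variable (hp : p ≠ 0) (hq : q ≠ 0) (hp1 : p - 1 ≠ 0)

lemma torusHom_mk (i : Fin 4) :
    torusHom hp hq hp1 (RingQuot.mkAlgHom K _ (ι K i)) = torusGen p q i := by
  simp [torusHom]

lemma torusHom_wz : torusHom hp hq hp1 (wz K p q) = twOp (torusCocycle p q) (1, 0, 0, 0) := by
  rw [wz, map_sub, map_mul, map_mul, wx, wy, torusHom_mk, torusHom_mk, torus_xy hp hq,
    torus_yx hp hq]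
  exact wz_aux (K := K) (E := Module.End K ((ℤ × ℤ × ℤ × ℤ) →₀ K)) hp1

lemma isUnit_twOp (hp : p ≠ 0) (hq : q ≠ 0) (v : ℤ × ℤ × ℤ × ℤ) : IsUnit (twOp (torusCocycle p q) v) := by
  have h1 := LocModel.twOp_torus_mul hp hq v (-v)
  have h2 := LocModel.twOp_torus_mul hp hq (-v) v
  rw [add_neg_cancel, twOp_zero LocModel.cocycle_zero_left] at h1
  rw [neg_add_cancel, twOp_zero LocModel.cocycle_zero_left] at h2
  have e : torusCocycle p q (-v) v = torusCocycle p q v (-v) := by simp [torusCocycle]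
  have hne := LocModel.cocycle_ne hp hq v (-v)
  rw [e] at h2
  refine ⟨⟨twOp (torusCocycle p q) v, (torusCocycle p q v (-v))⁻¹ • twOp (torusCocycle p q) (-v), ?_, ?_⟩, rfl⟩
  · rw [mul_smul_comm, h1, smul_smul, inv_mul_cancel₀ hne, one_smul]
  · rw [smul_mul_assoc, h2, smul_smul, inv_mul_cancel₀ hne, one_smul]

lemma isUnit_torusHom (a : locS K p q) : IsUnit (torusHom hp hq hp1 a) := by
  obtain ⟨a, ha⟩ := a
  induction ha using Submonoid.closure_induction with
  | mem a ha =>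
    simp only [Set.mem_insert_iff, Set.mem_singleton_iff] at ha
    rcases ha with rfl | rfl | rfl
    · simpa only [torusHom_wz] using isUnit_twOp hp hq _
    · simp only [ws, torusHom_mk]
      exact isUnit_twOp hp hq (0, 1, 0, 0)
    · simp only [wt, torusHom_mk]
      exact isUnit_twOp hp hq (0, 0, 1, 0)
  | one => simp
  | mul a b _ _ ha hb => simpa using ha.mul hb

end Torus

section Loc

/-- The localization map as a homomorphism of `K`-algebras. -/
def numAlgHom : ExtWeyl K p q 1 1 →ₐ[K] ALoc K p q :=
  { (OreLocalization.numeratorRingHom : ExtWeyl K p q 1 1 →+* ALoc K p q) with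
    commutes' := fun _ => rfl }

variable {K p q}

/-- The homomorphism from the localization to the quantum torus. -/
def locTorusHom (hp : p ≠ 0) (hq : q ≠ 0) (hp1 : p - 1 ≠ 0) :
    ALoc K p q →ₐ[K] Module.End K ((ℤ × ℤ × ℤ × ℤ) →₀ K) :=
  { OreLocalization.universalHom (torusHom hp hq hp1 : ExtWeyl K p q 1 1 →+* _)
      (IsUnit.liftRight ((torusHom hp hq hp1 : ExtWeyl K p q 1 1 →* _).comp (locS K p q).subtype)
        (isUnit_torusHom hp hq hp1)) (fun _ => rfl) with
    commutes' := fun r =>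
      (OreLocalization.universalHom_commutes _ _ _).trans (AlgHom.commutes (torusHom hp hq hp1) r) }

lemma locTorusHom_num (hp : p ≠ 0) (hq : q ≠ 0) (hp1 : p - 1 ≠ 0) (a : ExtWeyl K p q 1 1) :
    locTorusHom hp hq hp1 (numAlgHom K p q a) = torusHom hp hq hp1 a :=
  OreLocalization.universalHom_commutes _ _ _

variable (K p q)

lemma loc_gen : Algebra.adjoin K ({lx K p q, ly K p q, (uz K p q : ALoc K p q),
    (((uz K p q)⁻¹ : (ALoc K p q)ˣ) : ALoc K p q), (us K p q : ALoc K p q),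
    (((us K p q)⁻¹ : (ALoc K p q)ˣ) : ALoc K p q), (ut K p q : ALoc K p q),
    (((ut K p q)⁻¹ : (ALoc K p q)ˣ) : ALoc K p q)} : Set (ALoc K p q)) = ⊤ := by
  set T := Algebra.adjoin K ({lx K p q, ly K p q, (uz K p q : ALoc K p q),
    (((uz K p q)⁻¹ : (ALoc K p q)ˣ) : ALoc K p q), (us K p q : ALoc K p q),
    (((us K p q)⁻¹ : (ALoc K p q)ˣ) : ALoc K p q), (ut K p q : ALoc K p q),
    (((ut K p q)⁻¹ : (ALoc K p q)ˣ) : ALoc K p q)} : Set (ALoc K p q)) with hT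
  have hnum : ∀ a, numAlgHom K p q a ∈ T := by
    intro a
    obtain ⟨a, rfl⟩ := RingQuot.mkAlgHom_surjective K _ a
    induction a using FreeAlgebra.induction with
    | grade0 r => rw [AlgHom.commutes, AlgHom.commutes]; exact T.algebraMap_mem r
    | grade1 i =>
      fin_cases i
      · exact Algebra.subset_adjoin (Set.mem_insert _ _)
      · exact Algebra.subset_adjoin (Set.mem_insert_of_mem _ (Set.mem_insert _ _))
      · have : (us K p q : ALoc K p q) ∈ T := Algebra.subset_adjoin (by simp)
        exact this
      · have : (ut K p q : ALoc K p q) ∈ T := Algebra.subset_adjoin (by simp)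
        exact this
    | mul a b ha hb => rw [map_mul, map_mul]; exact T.mul_mem ha hb
    | add a b ha hb => rw [map_add, map_add]; exact T.add_mem ha hb
  have hinv : ∀ a ∈ locS K p q, ∃ u : (ALoc K p q)ˣ, (u : ALoc K p q) = numAlgHom K p q a ∧
      ((u⁻¹ : (ALoc K p q)ˣ) : ALoc K p q) ∈ T := by
    intro a ha
    induction ha using Submonoid.closure_induction with
    | mem a ha =>
      simp only [Set.mem_insert_iff, Set.mem_singleton_iff] at ha
      rcases ha with rfl | rfl | rfl
      · exact ⟨uz K p q, rfl, Algebra.subset_adjoin (by simp)⟩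
      · exact ⟨us K p q, rfl, Algebra.subset_adjoin (by simp)⟩
      · exact ⟨ut K p q, rfl, Algebra.subset_adjoin (by simp)⟩
    | one => exact ⟨1, by simp, by simp⟩
    | mul a b _ _ ha hb =>
      obtain ⟨u, hu, hu'⟩ := ha
      obtain ⟨v, hv, hv'⟩ := hb
      refine ⟨u * v, by rw [map_mul, Units.val_mul, hu, hv], ?_⟩
      rw [mul_inv_rev, Units.val_mul]
      exact T.mul_mem hv' hu'
  rw [eq_top_iff]
  intro a _
  induction a using OreLocalization.ind with
  | _ r s =>
    obtain ⟨u, hu, hu'⟩ := hinv s s.2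
    have h1 : (u : ALoc K p q) * (r /ₒ s) = numAlgHom K p q r := by
      rw [hu]
      exact OreLocalization.mul_cancel
    rw [← Units.eq_inv_mul_iff_mul_eq] at h1
    rw [h1]
    exact T.mul_mem hu' (hnum r)

/-- The localization `A_S` satisfies the abstract hypotheses. -/
def locModel (hp : p ≠ 0) (hq : q ≠ 0)
    (hpru : ∀ n : ℕ, 0 < n → p ^ n ≠ 1) (hqru : ∀ n : ℕ, 0 < n → q ^ n ≠ 1) :
    LocModel K p q (ALoc K p q) :=
  have hp1 : p - 1 ≠ 0 := sub_ne_zero.2 (by simpa using hpru 1 one_pos)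
  { hP := hp
    hQ := hq
    hPr := hpru
    hQr := hqru
    x := lx K p q
    y := ly K p q
    z := uz K p q
    s := us K p q
    t := ut K p q
    weyl := by
      have h' := congrArg (numAlgHom K p q) (wx_wy K p q)
      simp only [map_sub, map_mul, map_smul, map_one] at h'
      exact h'
    xz := by
      have h' := congrArg (numAlgHom K p q) (wx_wz K p q)
      simp only [map_mul, map_smul] at h'
      exact h'
    zy := by
      have h' := congrArg (numAlgHom K p q) (wz_wy K p q)
      simp only [map_mul, map_smul] at h'
      exact h'
    yx := by
      have h : wy K p q * wx K p q = (p - 1)⁻¹ • (wz K p q - 1) := by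
        rw [wz_eq, add_sub_cancel_left, smul_smul, inv_mul_cancel₀ hp1, one_smul]
      have h' := congrArg (numAlgHom K p q) h
      simp only [map_sub, map_mul, map_smul, map_one] at h'
      exact h'
    xy := by
      have h : wx K p q * wy K p q = (p - 1)⁻¹ • (p • wz K p q - 1) := by
        have e : p • wz K p q - 1 = (p - 1) • (1 + p • (wy K p q * wx K p q)) := by
          rw [wz_eq]
          module
        rw [wx_wy', e, smul_smul, inv_mul_cancel₀ hp1, one_smul]
      have h' := congrArg (numAlgHom K p q) h
      simp only [map_sub, map_mul, map_smul, map_one] at h'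
      exact h'
    sx := (ws_wx K p q).map (numAlgHom K p q)
    sy := (ws_wy K p q).map (numAlgHom K p q)
    tx := (wt_wx K p q).map (numAlgHom K p q)
    ty := (wt_wy K p q).map (numAlgHom K p q)
    zs := (wz_ws K p q).map (numAlgHom K p q)
    zt := (wz_wt K p q).map (numAlgHom K p q)
    st := by
      have h' := congrArg (numAlgHom K p q) (ws_wt K p q)
      simp only [map_mul, map_smul] at h'
      exact h'
    gen := loc_gen K p q
    ρ := locTorusHom hp hq hp1
    ρx := (locTorusHom_num hp hq hp1 _).trans (torusHom_mk hp hq hp1 0)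
    ρy := (locTorusHom_num hp hq hp1 _).trans (torusHom_mk hp hq hp1 1)
    ρz := (locTorusHom_num hp hq hp1 _).trans (torusHom_wz hp hq hp1)
    ρs := (locTorusHom_num hp hq hp1 _).trans (torusHom_mk hp hq hp1 2)
    ρt := (locTorusHom_num hp hq hp1 _).trans (torusHom_mk hp hq hp1 3) }

end Loc

/-- Assume neither `p` nor `q` is a root of unity. Every unital `K`-algebra
endomorphism `φ` of `A_S` satisfies either `φ(x) = g·x`, `φ(y) = h·y`, `φ(z) = α·z`, or
`φ(x) = g·y`, `φ(y) = h·x`, `φ(z) = α·z⁻¹`, with `g, h` in the subalgebra generated by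
`z^{±1}, s^{±1}, t^{±1}`; moreover `φ(s) = β·z^m s^c t^d` and `φ(t) = γ·z^n s^e t^f` for
some `α, β, γ ∈ K^×` and integers `m, n, c, d, e, f` with `cf − de = 1`. -/
theorem aloc_endomorphism_form
    (hp : p ≠ 0) (hq : q ≠ 0)
    (hpru : ∀ n : ℕ, 0 < n → p ^ n ≠ 1) (hqru : ∀ n : ℕ, 0 < n → q ^ n ≠ 1)
    (φ : ALoc K p q →ₐ[K] ALoc K p q) :
    ((∃ g ∈ laurentSub K p q, ∃ h ∈ laurentSub K p q, ∃ α : Kˣ,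
        φ (lx K p q) = g * lx K p q ∧
        φ (ly K p q) = h * ly K p q ∧
        φ (lz K p q) = (α : K) • lz K p q) ∨
      (∃ g ∈ laurentSub K p q, ∃ h ∈ laurentSub K p q, ∃ α : Kˣ,
        φ (lx K p q) = g * ly K p q ∧
        φ (ly K p q) = h * lx K p q ∧
        φ (lz K p q) = (α : K) • (((uz K p q)⁻¹ : (ALoc K p q)ˣ) : ALoc K p q))) ∧
    (∃ (β γ : Kˣ) (m n c d e f : ℤ), c * f - d * e = 1 ∧
      φ (ls K p q) =
        (β : K) • ((uz K p q ^ m * us K p q ^ c * ut K p q ^ d : (ALoc K p q)ˣ) : ALoc K p q) ∧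
      φ (lt K p q) =
        (γ : K) • ((uz K p q ^ n * us K p q ^ e * ut K p q ^ f : (ALoc K p q)ˣ) : ALoc K p q)) := by
  exact (locModel K p q hp hq hpru hqru).endo_form φ
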